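/- Let the r×r stochastic transition matrix P = {p(j|k)} be irreducible and let m be a nonzero integer. Then ρ(A_m) = 1 if and only if there exist real numbers s and w₁,…,w_r such that for every pair (j,k) with p(j|k) > 0, ⟨−m·log p(j|k)⟩ = ⟨s + w_k − w_j⟩. -/

import Mathlib

/-!
Write `e x = exp (2πi x)`, so that the entry `(j,k)` of `A_m` is `p(k|j) · e (-m log₂ p(k|j))`.
The moduli of the entries in each row sum to `1`, so the maximum principle bounds every
eigenvalue by `1` in modulus.

If the phases are aligned, then `v k = e (w k)` is an eigenvector with eigenvalue `e s`, of
modulus `1`, and the bound is attained.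

Conversely, the spectrum is finite, so spectral radius `1` yields `A v = λ v` with `‖λ‖ = 1`. At an
index `j` where `‖v j‖` is maximal, `λ v j` is a convex combination of the numbers
`e (-m log₂ p(k|j)) · v k`, none of which has larger modulus. Strict convexity of the disc
(`eq_of_convex_comb_extremal`) forces each term with positive weight to equal `λ v j`. Hence
maximality of `‖v j‖` propagates along transitions, by irreducibility (`closed_of_pow_pos`) it holds
at every index, and the arguments of `λ` and of the `v k` give `s` and `w`.
-/

/-!
STATEMENT 17: For an irreducible stochastic matrix P and a nonzero integer m,
ρ(A_m) = 1 iff there exist reals s and w₁,…,w_r such that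
⟨−m·log p(j|k)⟩ = ⟨s + w_k − w_j⟩ whenever p(j|k) > 0.
The alphabet is `Fin (r+2)`; `p j k = p(j|k)`.
-/

/-- The transition matrix `P` with entry `(j,k)` equal to `p(j|k)`. -/
def Pmat {r : ℕ} (p : Fin r → Fin r → ℝ) : Matrix (Fin r) (Fin r) ℝ :=
  Matrix.of fun j k => p j k

/-- The matrix A_m with (j,k) entry p(k|j)·exp(−2πi·m·log₂ p(k|j)) when
p(k|j) > 0 and 0 otherwise. -/
noncomputable def Amat {r : ℕ} (p : Fin r → Fin r → ℝ) (m : ℤ) :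
    Matrix (Fin r) (Fin r) ℂ :=
  Matrix.of fun j k =>
    if 0 < p k j then
      (p k j : ℂ) *
        Complex.exp (-(2 * (Real.pi : ℂ) * Complex.I * (m : ℂ) *
          ((Real.logb 2 (p k j) : ℝ) : ℂ)))
    else 0

/-- Spectral radius: supremum of the moduli of the eigenvalues. -/
noncomputable def specRad {r : ℕ} (A : Matrix (Fin r) (Fin r) ℂ) : ℝ :=
  sSup {x : ℝ | ∃ lam : ℂ,
    (∃ v : Fin r → ℂ, v ≠ 0 ∧ A.mulVec v = lam • v) ∧ x = ‖lam‖}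

/-- The character `x ↦ exp (2πi x)` of `ℝ / ℤ`. -/
noncomputable def phase (x : ℝ) : ℂ := Complex.exp (2 * (Real.pi : ℂ) * Complex.I * (x : ℂ))

lemma norm_phase (x : ℝ) : ‖phase x‖ = 1 := by
  have h : (2 * (Real.pi : ℂ) * Complex.I * (x : ℂ)) = ((2 * Real.pi * x : ℝ) : ℂ) * Complex.I := by
    push_cast; ring
  rw [phase, h, Complex.norm_exp_ofReal_mul_I]

lemma phase_add (x y : ℝ) : phase (x + y) = phase x * phase y := by
  rw [phase, phase, phase, ← Complex.exp_add]
  congr 1; push_cast; ring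

lemma phase_eq_iff (x y : ℝ) : phase x = phase y ↔ Int.fract x = Int.fract y := by
  have h0 : (2 * (Real.pi : ℂ) * Complex.I) ≠ 0 := Complex.two_pi_I_ne_zero
  rw [phase, phase, Complex.exp_eq_exp_iff_exists_int, Int.fract_eq_fract]
  refine exists_congr fun n => ?_
  constructor
  · intro h
    have h1 : (2 * (Real.pi : ℂ) * Complex.I) * (x : ℂ)
        = (2 * (Real.pi : ℂ) * Complex.I) * ((y + n : ℝ) : ℂ) := by
      rw [h]; push_cast; ring
    have h2 : x = y + n := by exact_mod_cast mul_left_cancel₀ h0 h1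
    linarith
  · intro h
    have h2 : x = y + n := by linarith
    rw [h2]; push_cast; ring

lemma eq_norm_mul_phase (z : ℂ) : z = (‖z‖ : ℂ) * phase (z.arg / (2 * Real.pi)) := by
  have hpi : (Real.pi : ℂ) ≠ 0 := by exact_mod_cast Real.pi_ne_zero
  have h : 2 * (Real.pi : ℂ) * Complex.I * ((z.arg / (2 * Real.pi) : ℝ) : ℂ)
      = (z.arg : ℂ) * Complex.I := by
    push_cast; field_simp
  rw [phase, h, Complex.norm_mul_exp_arg_mul_I]

lemma Amat_apply {r : ℕ} (p : Fin r → Fin r → ℝ) (hpnn : ∀ j k, 0 ≤ p j k) (m : ℤ)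
    (j k : Fin r) :
    Amat p m j k = (p k j : ℂ) * phase (-(m : ℝ) * Real.logb 2 (p k j)) := by
  rw [Amat, Matrix.of_apply]
  split_ifs with h
  · rw [phase]
    congr 2; push_cast; ring
  · have : p k j = 0 := le_antisymm (not_lt.mp h) (hpnn k j)
    simp [this]

/-- The eigenvalue equation in coordinates. -/
lemma eigen_apply {r : ℕ} (p : Fin r → Fin r → ℝ) (hpnn : ∀ j k, 0 ≤ p j k) (m : ℤ)
    {lam : ℂ} {v : Fin r → ℂ} (h : (Amat p m).mulVec v = lam • v) (j : Fin r) :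
    ∑ k, (p k j : ℂ) * (phase (-(m : ℝ) * Real.logb 2 (p k j)) * v k) = lam * v j := by
  have := congrFun h j
  simp only [Matrix.mulVec, dotProduct, Pi.smul_apply, smul_eq_mul, Amat_apply p hpnn] at this
  rw [← this]
  exact Finset.sum_congr rfl fun k _ => by ring

lemma norm_eigenvalue_le_one {r : ℕ} (p : Fin r → Fin r → ℝ)
    (hpnn : ∀ j k, 0 ≤ p j k) (hpsum : ∀ k, ∑ j, p j k = 1) (m : ℤ)
    {lam : ℂ} {v : Fin r → ℂ} (hv : v ≠ 0) (h : (Amat p m).mulVec v = lam • v) :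
    ‖lam‖ ≤ 1 := by
  obtain ⟨i, hi⟩ := Function.ne_iff.mp hv
  have : Nonempty (Fin r) := ⟨i⟩
  obtain ⟨j, hj⟩ := Finite.exists_max fun k => ‖v k‖
  have hpos : 0 < ‖v j‖ := lt_of_lt_of_le (norm_pos_iff.mpr hi) (hj i)
  have h1 : ‖lam‖ * ‖v j‖ ≤ 1 * ‖v j‖ := by
    rw [← norm_mul, ← eigen_apply p hpnn m h j, ← hpsum j, Finset.sum_mul]
    refine (norm_sum_le _ _).trans (Finset.sum_le_sum fun k _ => ?_)
    rw [norm_mul, norm_mul, norm_phase, one_mul, Complex.norm_real, Real.norm_of_nonneg (hpnn k j)]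
    exact mul_le_mul_of_nonneg_left (hj k) (hpnn k j)
  exact le_of_mul_le_mul_right h1 hpos

/-- Every point of the closed disc of radius `‖c‖` on its boundary is extreme: a convex combination
equal to `c` has all terms of positive weight equal to `c`. -/
lemma eq_of_convex_comb_extremal {ι : Type*} [Fintype ι] (q : ι → ℝ) (z : ι → ℂ) (c : ℂ)
    (hq : ∀ k, 0 ≤ q k) (hsum : ∑ k, q k = 1) (hz : ∀ k, ‖z k‖ ≤ ‖c‖)
    (hc : ∑ k, (q k : ℂ) * z k = c) (k : ι) (hk : 0 < q k) : z k = c := by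
  have hle : ∀ i, inner ℝ c (z i) ≤ ‖c‖ ^ 2 := fun i => by
    have := real_inner_le_norm c (z i)
    nlinarith [hz i, norm_nonneg c]
  have hin : ∑ i, q i * inner ℝ c (z i) = ‖c‖ ^ 2 := by
    rw [← real_inner_self_eq_norm_sq c]
    nth_rewrite 3 [← hc]
    rw [inner_sum]
    refine Finset.sum_congr rfl fun i _ => ?_
    rw [← Complex.real_smul, real_inner_smul_right]
  have hzero : ∑ i, q i * (‖c‖ ^ 2 - inner ℝ c (z i)) = 0 := by
    simp only [mul_sub, Finset.sum_sub_distrib, hin, ← Finset.sum_mul, hsum]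
    ring
  have hterm := (Finset.sum_eq_zero_iff_of_nonneg fun i _ =>
    mul_nonneg (hq i) (sub_nonneg.mpr (hle i))).mp hzero k (Finset.mem_univ k)
  have heq : ‖c‖ ^ 2 - inner ℝ c (z k) = 0 := (mul_eq_zero.mp hterm).resolve_left hk.ne'
  have hexp := norm_sub_sq_real c (z k)
  have hsq : ‖z k‖ ^ 2 ≤ ‖c‖ ^ 2 := pow_le_pow_left₀ (norm_nonneg _) (hz k) 2
  have h0 : ‖c - z k‖ ^ 2 = 0 := le_antisymm (by linarith) (sq_nonneg _)
  have h1 : c - z k = 0 := norm_eq_zero.mp (pow_eq_zero_iff two_ne_zero |>.mp h0)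
  exact (sub_eq_zero.mp h1).symm

/-- A set of states closed under one-step transitions contains every state reachable from it. -/
lemma closed_of_pow_pos {r : ℕ} (p : Fin r → Fin r → ℝ) (hpnn : ∀ j k, 0 ≤ p j k)
    (S : Fin r → Prop) (hS : ∀ j k, 0 < p j k → S k → S j) (l : ℕ) :
    ∀ j k, 0 < (Pmat p ^ l) j k → S k → S j := by
  induction l with
  | zero =>
    intro j k h hk
    by_cases hjk : j = k
    · rwa [hjk]
    · simp [Matrix.one_apply_ne hjk] at h
  | succ l ih =>
    intro j k h hk
    rw [pow_succ, Matrix.mul_apply] at h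
    obtain ⟨i, -, hi⟩ := Finset.exists_lt_of_sum_lt (f := fun _ => (0 : ℝ)) (by simpa using h)
    have hpi : 0 < p i k := lt_of_le_of_ne (hpnn i k) fun h0 => by
      simp [Pmat, ← h0] at hi
    exact ih j i (pos_of_mul_pos_left hi (hpnn i k)) (hS i k hpi hk)

/-- The moduli of the eigenvalues form a finite set, so a nonzero supremum is attained. -/
lemma exists_eigenvalue_norm_eq_one {r : ℕ} (A : Matrix (Fin r) (Fin r) ℂ) (h : specRad A = 1) :
    ∃ lam : ℂ, ‖lam‖ = 1 ∧ ∃ v : Fin r → ℂ, v ≠ 0 ∧ A.mulVec v = lam • v := by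
  rw [specRad] at h
  set T := {x : ℝ | ∃ lam : ℂ,
    (∃ v : Fin r → ℂ, v ≠ 0 ∧ A.mulVec v = lam • v) ∧ x = ‖lam‖} with hT
  have hfin : T.Finite := by
    refine ((Module.End.finite_hasEigenvalue (Matrix.toLin' A)).image fun z : ℂ => ‖z‖).subset ?_
    rintro x ⟨lam, ⟨v, hv, hAv⟩, rfl⟩
    refine ⟨lam, ?_, rfl⟩
    exact Module.End.hasEigenvalue_of_hasEigenvector (x := v)
      ⟨Module.End.mem_eigenspace_iff.mpr (by rw [Matrix.toLin'_apply, hAv]), hv⟩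
  have hne : T.Nonempty := by
    by_contra hne
    rw [Set.not_nonempty_iff_eq_empty.mp hne, Real.sSup_empty] at h
    exact zero_ne_one h
  obtain ⟨lam, hv, hx⟩ := hne.csSup_mem hfin
  exact ⟨lam, hx ▸ h, hv⟩

theorem spectral_radius_one_iff_phase_alignment (r : ℕ)
    (p : Fin (r + 2) → Fin (r + 2) → ℝ)
    (hpnn : ∀ j k, 0 ≤ p j k) (hpsum : ∀ k, ∑ j, p j k = 1)
    (hirred : ∀ j k : Fin (r + 2), ∃ l : ℕ, 0 < l ∧ 0 < (Pmat p ^ l) j k)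
    (m : ℤ) (hm : m ≠ 0) :
    specRad (Amat p m) = 1 ↔
      ∃ (s : ℝ) (w : Fin (r + 2) → ℝ),
        ∀ j k, 0 < p j k →
          Int.fract (-(m : ℝ) * Real.logb 2 (p j k)) =
            Int.fract (s + w k - w j) := by
  constructor
  · intro h
    obtain ⟨lam, hlam, v, hv, hAv⟩ := exists_eigenvalue_norm_eq_one _ h
    obtain ⟨j₀, hj₀⟩ := Finite.exists_max fun k => ‖v k‖
    have hpos : 0 < ‖v j₀‖ := by
      obtain ⟨i, hi⟩ := Function.ne_iff.mp hv
      exact lt_of_lt_of_le (norm_pos_iff.mpr hi) (hj₀ i)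
    have hext : ∀ j k, ‖v k‖ = ‖v j₀‖ → 0 < p j k →
        phase (-(m : ℝ) * Real.logb 2 (p j k)) * v j = lam * v k := by
      intro j k hk hjk
      refine eq_of_convex_comb_extremal (fun i => p i k)
        (fun i => phase (-(m : ℝ) * Real.logb 2 (p i k)) * v i) _ (fun i => hpnn i k) (hpsum k)
        (fun i => ?_) (eigen_apply p hpnn m hAv k) j hjk
      rw [norm_mul, norm_mul, norm_phase, hlam, one_mul, one_mul, hk]
      exact hj₀ i
    have hmax : ∀ j, ‖v j‖ = ‖v j₀‖ := by
      intro j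
      obtain ⟨l, -, hl⟩ := hirred j j₀
      refine closed_of_pow_pos p hpnn (fun j => ‖v j‖ = ‖v j₀‖) (fun j k hjk hk => ?_) l j j₀ hl rfl
      have := congrArg norm (hext j k hk hjk)
      rwa [norm_mul, norm_mul, norm_phase, hlam, one_mul, one_mul, hk] at this
    refine ⟨lam.arg / (2 * Real.pi), fun k => (v k).arg / (2 * Real.pi), fun j k hjk => ?_⟩
    have hjk' := hext j k (hmax k) hjk
    rw [eq_norm_mul_phase (v j), eq_norm_mul_phase (v k), hmax j, hmax k,
      eq_norm_mul_phase lam, hlam] at hjk'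
    have hM : ((‖v j₀‖ : ℝ) : ℂ) ≠ 0 := by exact_mod_cast hpos.ne'
    have hphase : phase (-(m : ℝ) * Real.logb 2 (p j k) + (v j).arg / (2 * Real.pi))
        = phase (lam.arg / (2 * Real.pi) + (v k).arg / (2 * Real.pi)) := by
      rw [phase_add, phase_add]
      refine mul_left_cancel₀ hM ?_
      rw [Complex.ofReal_one, one_mul] at hjk'
      linear_combination hjk'
    rw [phase_eq_iff, Int.fract_eq_fract] at hphase
    rw [Int.fract_eq_fract]
    obtain ⟨z, hz⟩ := hphase
    exact ⟨z, by linarith⟩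
  · rintro ⟨s, w, hw⟩
    refine IsGreatest.csSup_eq ⟨⟨phase s, ⟨fun k => phase (w k), ?_, ?_⟩, (norm_phase s).symm⟩, ?_⟩
    · intro h0
      have := congrArg norm (congrFun h0 0)
      simp [norm_phase] at this
    · funext j
      have hsum : ∑ k, (p k j : ℂ) = 1 := by exact_mod_cast hpsum j
      simp only [Matrix.mulVec, dotProduct, Pi.smul_apply, smul_eq_mul, Amat_apply p hpnn]
      rw [← one_mul (phase s * phase (w j)), ← hsum, Finset.sum_mul]
      refine Finset.sum_congr rfl fun k _ => ?_
      rcases (hpnn k j).eq_or_lt with h0 | hk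
      · simp [← h0]
      · rw [(phase_eq_iff _ _).mpr (hw k j hk), mul_assoc, ← phase_add, ← phase_add,
          sub_add_cancel]
    · rintro x ⟨lam, ⟨v, hv, hAv⟩, rfl⟩
      exact norm_eigenvalue_le_one p hpnn hpsum m hv hAv
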